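/- The space of torsion tensors on ℝ⁴ satisfying W_i = 0 for all i = 0,1,2,3 equals the internal direct sum 𝒜 ⊕ C₋. -/

import Mathlib

/-!
For a torsion tensor `T` and a direct ordering `(i,j,k,l)`, the three terms of `W_i` are the
rotations of `Z` in `(j,k,l)`, so `W_i = 2 c(T)(e_i) + 𝔟(T)(e_j,e_k,e_l)`. Since
`vol(ν♯,e_j,e_k,e_l) = ν(e_i)`, the system `W = 0` is the single identity of `3`-forms
`𝔟(T) = -2 ⋆c(T)`, where `⋆ν = vol(ν♯,·,·,·)`. On `ker c` it reads `𝔟(T) = 0`, so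
`𝒜 = {W = 0} ∩ ker c`. The element of `C₋` attached to `ν` has trace `3ν` and Bianchi form `-6 ⋆ν`,
so `C₋ ⊆ {W = 0}` and `C₋` is a complement of `ker c`. The modular law concludes.
-/

noncomputable section

set_option maxSynthPendingDepth 3

/-- Euclidean `n`-space `ℝⁿ`. -/
abbrev V (n : ℕ) := Fin n → ℝ

/-- Trilinear forms on `ℝⁿ`. -/
abbrev Tri (n : ℕ) := V n →ₗ[ℝ] V n →ₗ[ℝ] V n →ₗ[ℝ] ℝ

/-- The standard inner product on `ℝⁿ`. -/
def inn {n : ℕ} (X Y : V n) : ℝ := ∑ i, X i * Y i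

/-- The standard orthonormal basis of `ℝⁿ`. -/
def stdB {n : ℕ} (i : Fin n) : V n := Pi.single i 1

/-- Torsion tensors: trilinear forms antisymmetric in the first two arguments. -/
def Torsion (n : ℕ) : Submodule ℝ (Tri n) where
  carrier := {T | ∀ X Y Z, T X Y Z = - T Y X Z}
  zero_mem' := by intro X Y Z; simp
  add_mem' := by
    intro T S hT hS X Y Z
    simp only [LinearMap.add_apply]
    linear_combination hT X Y Z + hS X Y Z
  smul_mem' := by
    intro c T hT X Y Z
    simp only [LinearMap.smul_apply, smul_eq_mul]
    linear_combination c * hT X Y Z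

/-- The kernel of the Bianchi map `𝔟(T)(X,Y,Z) = T(X,Y,Z) + T(Y,Z,X) + T(Z,X,Y)`. -/
def kerBianchi (n : ℕ) : Submodule ℝ (Tri n) where
  carrier := {T | ∀ X Y Z, T X Y Z + T Y Z X + T Z X Y = 0}
  zero_mem' := by intro X Y Z; simp
  add_mem' := by
    intro T S hT hS X Y Z
    simp only [LinearMap.add_apply]
    linear_combination hT X Y Z + hS X Y Z
  smul_mem' := by
    intro c T hT X Y Z
    simp only [LinearMap.smul_apply, smul_eq_mul]
    linear_combination c * hT X Y Z

/-- The kernel of the trace map `c(T)(X) = Σⱼ T(X,eⱼ,eⱼ)`. -/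
def kerTrace (n : ℕ) : Submodule ℝ (Tri n) where
  carrier := {T | ∀ X, ∑ j, T X (stdB j) (stdB j) = 0}
  zero_mem' := by intro X; simp
  add_mem' := by
    intro T S hT hS X
    simp only [LinearMap.add_apply, Finset.sum_add_distrib]
    rw [hT X, hS X]; ring
  smul_mem' := by
    intro c T hT X
    simp only [LinearMap.smul_apply, smul_eq_mul, ← Finset.mul_sum]
    rw [hT X, mul_zero]
/-- The Cartan component `𝒜 = ker 𝔟 ∩ ker c` (inside the torsion tensors). -/
def CartanA (n : ℕ) : Submodule ℝ (Tri n) := Torsion n ⊓ kerBianchi n ⊓ kerTrace n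

/-- `(i,j,k,l)` is a direct ordering when it is an even permutation of `(0,1,2,3)`. -/
def DirectOrdering (i j k l : Fin 4) : Prop :=
  ∃ σ : Equiv.Perm (Fin 4), Equiv.Perm.sign σ = 1 ∧ σ 0 = i ∧ σ 1 = j ∧ σ 2 = k ∧ σ 3 = l

instance (i j k l : Fin 4) : Decidable (DirectOrdering i j k l) :=
  inferInstanceAs (Decidable (∃ σ : Equiv.Perm (Fin 4),
    Equiv.Perm.sign σ = 1 ∧ σ 0 = i ∧ σ 1 = j ∧ σ 2 = k ∧ σ 3 = l))

/-- `Z_{ijk} = T_{ijj} + T_{ikk} + T_{jkl}` for a direct ordering `(i,j,k,l)`. -/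
def Zc (T : Tri 4) (i j k l : Fin 4) : ℝ :=
  T (stdB i) (stdB j) (stdB j) + T (stdB i) (stdB k) (stdB k) + T (stdB j) (stdB k) (stdB l)

/-- `W_i`: the sum of `Z_{ijk}` over the three direct orderings `(i,j,k,l)` with
first entry `i`. -/
def Wc (T : Tri 4) (i : Fin 4) : ℝ :=
  ∑ j : Fin 4, ∑ k : Fin 4, ∑ l : Fin 4,
    if DirectOrdering i j k l then Zc T i j k l else 0

lemma Zc_add (T S : Tri 4) (i j k l : Fin 4) :
    Zc (T + S) i j k l = Zc T i j k l + Zc S i j k l := by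
  simp only [Zc, LinearMap.add_apply]; ring

lemma Zc_smul (c : ℝ) (T : Tri 4) (i j k l : Fin 4) :
    Zc (c • T) i j k l = c * Zc T i j k l := by
  simp only [Zc, LinearMap.smul_apply, smul_eq_mul]; ring

lemma Wc_add (T S : Tri 4) (i : Fin 4) : Wc (T + S) i = Wc T i + Wc S i := by
  simp only [Wc, ← Finset.sum_add_distrib]
  refine Finset.sum_congr rfl fun j _ => Finset.sum_congr rfl fun k _ =>
    Finset.sum_congr rfl fun l _ => ?_
  split_ifs with h
  · exact Zc_add T S i j k l
  · simp

lemma Wc_smul (c : ℝ) (T : Tri 4) (i : Fin 4) : Wc (c • T) i = c * Wc T i := by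
  simp only [Wc, Finset.mul_sum]
  refine Finset.sum_congr rfl fun j _ => Finset.sum_congr rfl fun k _ =>
    Finset.sum_congr rfl fun l _ => ?_
  split_ifs with h
  · exact Zc_smul c T i j k l
  · simp

lemma Wc_zero (i : Fin 4) : Wc (0 : Tri 4) i = 0 := by
  simp [Wc, Zc]

/-- The space of torsion tensors satisfying `W_i = 0` for `i = 0,1,2,3`. -/
def WZero : Submodule ℝ (Tri 4) where
  carrier := {T | T ∈ Torsion 4 ∧ ∀ i, Wc T i = 0}
  zero_mem' := ⟨(Torsion 4).zero_mem, fun i => Wc_zero i⟩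
  add_mem' := by
    rintro T S ⟨hT, hT'⟩ ⟨hS, hS'⟩
    exact ⟨(Torsion 4).add_mem hT hS, fun i => by rw [Wc_add, hT' i, hS' i, add_zero]⟩
  smul_mem' := by
    rintro c T ⟨hT, hT'⟩
    exact ⟨(Torsion 4).smul_mem c hT, fun i => by rw [Wc_smul, hT' i, mul_zero]⟩

/-- The volume form of `ℝ⁴`: the determinant with respect to the standard basis. -/
def vol4 (a b c d : V 4) : ℝ := Matrix.det (Matrix.of ![a, b, c, d])

/-- The vector dual to a linear functional `ν` under the standard inner product. -/
def sharp (ν : V 4 →ₗ[ℝ] ℝ) : V 4 := fun i => ν (stdB i)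

lemma sharp_add (ν ρ : V 4 →ₗ[ℝ] ℝ) : sharp (ν + ρ) = sharp ν + sharp ρ := by
  funext i; simp [sharp]

lemma sharp_smul (c : ℝ) (ν : V 4 →ₗ[ℝ] ℝ) : sharp (c • ν) = c • sharp ν := by
  funext i; simp [sharp]

lemma vol4_add_left (a b x y z : V 4) :
    vol4 (a + b) x y z = vol4 a x y z + vol4 b x y z := by
  simp [vol4, Matrix.det_succ_row_zero, Fin.sum_univ_succ, Pi.add_apply]
  ring

lemma vol4_smul_left (c : ℝ) (a x y z : V 4) :
    vol4 (c • a) x y z = c * vol4 a x y z := by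
  simp [vol4, Matrix.det_succ_row_zero, Fin.sum_univ_succ, Pi.smul_apply, smul_eq_mul]
  ring

lemma vol4_zero_left (x y z : V 4) : vol4 0 x y z = 0 := by
  simp [vol4, Matrix.det_succ_row_zero, Fin.sum_univ_succ]

/-- `C₋`: tensors `T(X,Y,Z) = ν(X)⟨Y,Z⟩ − ν(Y)⟨X,Z⟩ − 2 vol(ν♯,X,Y,Z)`. -/
def Cminus : Submodule ℝ (Tri 4) where
  carrier := {T | ∃ ν : V 4 →ₗ[ℝ] ℝ, ∀ X Y Z,
      T X Y Z = ν X * inn Y Z - ν Y * inn X Z - 2 * vol4 (sharp ν) X Y Z}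
  zero_mem' := ⟨0, by
    intro X Y Z
    have h : sharp (0 : V 4 →ₗ[ℝ] ℝ) = 0 := by funext i; simp [sharp]
    simp [h, vol4_zero_left]⟩
  add_mem' := by
    rintro T S ⟨ν, hν⟩ ⟨ρ, hρ⟩
    refine ⟨ν + ρ, fun X Y Z => ?_⟩
    simp only [LinearMap.add_apply, sharp_add, vol4_add_left]
    linear_combination hν X Y Z + hρ X Y Z
  smul_mem' := by
    rintro c T ⟨ν, hν⟩
    refine ⟨c • ν, fun X Y Z => ?_⟩
    simp only [LinearMap.smul_apply, smul_eq_mul, sharp_smul, vol4_smul_left]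
    linear_combination c * hν X Y Z

open Module

lemma isCompl_ker_range_of_forall_apply_eq_smul {K E F : Type*} [DivisionRing K]
    [AddCommGroup E] [Module K E] [AddCommGroup F] [Module K F] {f : E →ₗ[K] F} {g : F →ₗ[K] E}
    {c : K} (hc : c ≠ 0) (hfg : ∀ y, f (g y) = c • y) :
    IsCompl (LinearMap.ker f) (LinearMap.range g) := by
  refine ⟨Submodule.disjoint_def.2 ?_, codisjoint_iff.2 (eq_top_iff.2 fun x _ => ?_)⟩
  · rintro _ hx ⟨y, rfl⟩
    rw [LinearMap.mem_ker, hfg, smul_eq_zero_iff_right hc] at hx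
    rw [hx, map_zero]
  · refine Submodule.mem_sup.2 ⟨x - g (c⁻¹ • f x), ?_, _, ⟨_, rfl⟩, sub_add_cancel _ _⟩
    rw [LinearMap.mem_ker, map_sub, hfg, smul_inv_smul₀ hc, sub_self]

section TorsionTensors

variable {n : ℕ}

lemma inn_comm (X Y : V n) : inn X Y = inn Y X :=
  dotProduct_comm X Y

lemma inn_stdB (X : V n) (i : Fin n) : inn X (stdB i) = X i :=
  dotProduct_single_one X i

lemma sum_mul_apply_stdB (ν : Dual ℝ (V n)) (X : V n) : ∑ i, X i * ν (stdB i) = ν X := by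
  conv_rhs => rw [← Finset.univ_sum_single X, map_sum]
  simp only [stdB, ← smul_eq_mul, ← map_smul, ← Pi.single_smul']
  simp only [smul_eq_mul, mul_one]

/-- The trace map `c`, sending a trilinear form `T` to the functional `X ↦ ∑ⱼ T(X, eⱼ, eⱼ)`. -/
def traceForm : Tri n →ₗ[ℝ] Dual ℝ (V n) where
  toFun T := ∑ j, (T.flip (stdB j)).flip (stdB j)
  map_add' T S := by ext; simp [Finset.sum_add_distrib]
  map_smul' a T := by ext; simp [Finset.mul_sum]

lemma traceForm_apply (T : Tri n) (X : V n) :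
    traceForm T X = ∑ j, T X (stdB j) (stdB j) := by
  simp [traceForm]

lemma kerTrace_eq_ker_traceForm : kerTrace n = LinearMap.ker traceForm := by
  ext T
  simp [kerTrace, LinearMap.ext_iff, traceForm_apply]

/-- Uncurrying of trilinear forms, giving access to the library on multilinear maps. -/
def triEquiv : Tri n ≃ₗ[ℝ] MultilinearMap ℝ (fun _ : Fin 3 => V n) ℝ :=
  let uncurryOne := MultilinearMap.ofSubsingletonₗ ℝ ℝ (V n) ℝ (0 : Fin 1)
  let uncurryTwo := uncurryOne.congrRight (M := V n) ≪≫ₗ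
    (multilinearCurryLeftEquiv ℝ (fun _ : Fin 2 => V n) ℝ).symm
  uncurryTwo.congrRight ≪≫ₗ (multilinearCurryLeftEquiv ℝ (fun _ : Fin 3 => V n) ℝ).symm

lemma triEquiv_apply (T : Tri n) (v : Fin 3 → V n) : triEquiv T v = T (v 0) (v 1) (v 2) :=
  rfl

lemma triEquiv_symm_apply (m : MultilinearMap ℝ (fun _ : Fin 3 => V n) ℝ) (X Y Z : V n) :
    triEquiv.symm m X Y Z = m ![X, Y, Z] := by
  conv_rhs => rw [← triEquiv.apply_symm_apply m]
  rfl

/-- The Bianchi map `𝔟` of torsion tensors with values in `3`-forms, encoded as half the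
alternatization so that it is defined and linear on all trilinear forms. It is the cyclic sum only
on torsion tensors. -/
def bianchiForm : Tri n →ₗ[ℝ] V n [⋀^Fin 3]→ₗ[ℝ] ℝ where
  toFun T := (2⁻¹ : ℝ) • MultilinearMap.alternatization (triEquiv T)
  map_add' T S := by simp only [map_add, smul_add]
  map_smul' a T := by
    ext v
    simp [MultilinearMap.alternatization_apply, Finset.mul_sum, mul_left_comm, mul_smul_comm]

lemma bianchiForm_apply {T : Tri n} (hT : T ∈ Torsion n) (v : Fin 3 → V n) :
    bianchiForm T v =
      T (v 0) (v 1) (v 2) + T (v 1) (v 2) (v 0) + T (v 2) (v 0) (v 1) := by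
  have huniv : (Finset.univ : Finset (Equiv.Perm (Fin 3))) =
      {1, finRotate 3, finRotate 3 ^ 2, Equiv.swap 0 1, Equiv.swap 1 2, Equiv.swap 0 2} := by
    decide
  have hsum : bianchiForm T v = 2⁻¹ *
      (T (v 0) (v 1) (v 2) + T (v 1) (v 2) (v 0) + T (v 2) (v 0) (v 1)
        - T (v 1) (v 0) (v 2) - T (v 0) (v 2) (v 1) - T (v 2) (v 1) (v 0)) := by
    simp only [bianchiForm, LinearMap.coe_mk, AddHom.coe_mk, AlternatingMap.smul_apply,
      MultilinearMap.alternatization_apply, huniv]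
    repeat rw [Finset.sum_insert (by decide)]
    simp only [Finset.sum_singleton, MultilinearMap.domDomCongr_apply, triEquiv_apply, pow_two,
      Equiv.Perm.sign_one, Equiv.Perm.sign_mul, Equiv.Perm.sign_swap', sign_finRotate,
      Equiv.Perm.coe_one, Equiv.Perm.coe_mul, Function.comp_apply, id_eq, finRotate_apply,
      Equiv.swap_apply_def, Fin.reduceAdd, Fin.reduceEq, zero_add, zero_ne_one, one_ne_zero,
      Nat.add_one_sub_one, mul_neg, mul_one, neg_neg, ↓reduceIte, Units.neg_smul, one_smul,
      smul_eq_mul]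
    ring
  rw [hsum, hT (v 1) (v 0) (v 2), hT (v 0) (v 2) (v 1), hT (v 2) (v 1) (v 0)]
  ring

lemma mem_kerBianchi_iff {T : Tri n} (hT : T ∈ Torsion n) :
    T ∈ kerBianchi n ↔ bianchiForm T = 0 := by
  refine ⟨fun h => AlternatingMap.ext fun v => ?_, fun h X Y Z => ?_⟩
  · exact (bianchiForm_apply hT v).trans (h _ _ _)
  · exact (bianchiForm_apply hT ![X, Y, Z]).symm.trans (DFunLike.congr_fun h _)

/-- The torsion tensor of vectorial type `(X, Y, Z) ↦ ν(X)⟨Y, Z⟩ − ν(Y)⟨X, Z⟩`. -/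
def vectorialTorsion : Dual ℝ (V n) →ₗ[ℝ] Tri n where
  toFun ν :=
    let A : Tri n := ν.smulRight (dotProductEquiv ℝ (Fin n)).toLinearMap
    A - A.flip
  map_add' ν ρ := by ext; simp; ring
  map_smul' a ν := by ext; simp; ring

lemma vectorialTorsion_apply (ν : Dual ℝ (V n)) (X Y Z : V n) :
    vectorialTorsion ν X Y Z = ν X * inn Y Z - ν Y * inn X Z :=
  rfl

lemma vectorialTorsion_mem_torsion (ν : Dual ℝ (V n)) : vectorialTorsion ν ∈ Torsion n :=
  fun X Y Z => by simp only [vectorialTorsion_apply, neg_sub]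

lemma traceForm_vectorialTorsion (ν : Dual ℝ (V n)) :
    traceForm (vectorialTorsion ν) = ((n : ℝ) - 1) • ν := by
  have inn_stdB_self (j : Fin n) : inn (stdB j) (stdB j) = 1 := by
    rw [inn_stdB, stdB, Pi.single_eq_same]
  refine LinearMap.ext fun X => ?_
  calc traceForm (vectorialTorsion ν) X
      = ∑ j : Fin n, (ν X * inn (stdB j) (stdB j) - X j * ν (stdB j)) := by
        simp only [traceForm_apply, vectorialTorsion_apply, inn_stdB, mul_comm (ν (stdB _))]
    _ = n * ν X - ν X := by
        simp only [Finset.sum_sub_distrib, sum_mul_apply_stdB, inn_stdB_self, mul_one,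
          Finset.sum_const, Finset.card_fin, nsmul_eq_mul]
    _ = (((n : ℝ) - 1) • ν) X := by
        rw [LinearMap.smul_apply, smul_eq_mul, sub_one_mul]

lemma bianchiForm_vectorialTorsion (ν : Dual ℝ (V n)) :
    bianchiForm (vectorialTorsion ν) = 0 := by
  ext v
  rw [bianchiForm_apply (vectorialTorsion_mem_torsion ν), AlternatingMap.zero_apply]
  simp only [vectorialTorsion_apply, inn_comm (v 2), inn_comm (v 1) (v 0)]
  ring

lemma alternating_swap_left (ω : V n [⋀^Fin 3]→ₗ[ℝ] ℝ) (X Y Z : V n) :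
    ω ![X, Y, Z] = -ω ![Y, X, Z] := by
  rw [← ω.map_swap ![Y, X, Z] (i := 0) (j := 1) (by decide)]
  congr 1
  ext i : 1
  fin_cases i <;> rfl

/-- The totally skew-symmetric torsion tensor with underlying `3`-form `ω`. -/
def skewTorsion : V n [⋀^Fin 3]→ₗ[ℝ] ℝ →ₗ[ℝ] Tri n :=
  triEquiv.symm.toLinearMap ∘ₗ AlternatingMap.toMultilinearMapLM

lemma skewTorsion_apply (ω : V n [⋀^Fin 3]→ₗ[ℝ] ℝ) (X Y Z : V n) :
    skewTorsion ω X Y Z = ω ![X, Y, Z] :=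
  triEquiv_symm_apply ω.toMultilinearMap X Y Z

lemma skewTorsion_mem_torsion (ω : V n [⋀^Fin 3]→ₗ[ℝ] ℝ) : skewTorsion ω ∈ Torsion n :=
  fun X Y Z => by rw [skewTorsion_apply, skewTorsion_apply, alternating_swap_left]

lemma traceForm_skewTorsion (ω : V n [⋀^Fin 3]→ₗ[ℝ] ℝ) : traceForm (skewTorsion ω) = 0 := by
  refine LinearMap.ext fun X => ?_
  rw [traceForm_apply, LinearMap.zero_apply]
  refine Finset.sum_eq_zero fun j _ => ?_
  rw [skewTorsion_apply]
  exact ω.map_eq_zero_of_eq _ (i := 1) (j := 2) rfl (by decide)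

lemma bianchiForm_skewTorsion (ω : V n [⋀^Fin 3]→ₗ[ℝ] ℝ) :
    bianchiForm (skewTorsion ω) = (3 : ℝ) • ω := by
  have halt : bianchiForm (skewTorsion ω) = (2⁻¹ : ℝ) • Nat.factorial 3 • ω := by
    simp [bianchiForm, skewTorsion, AlternatingMap.coe_alternatization]
  rw [halt, ← Nat.cast_smul_eq_nsmul ℝ, smul_smul]
  norm_num [Nat.factorial]

end TorsionTensors

/-- The Hodge dual `vol(ν♯, ·, ·, ·)` of a functional on `ℝ⁴`. -/
def hodgeStar : Dual ℝ (V 4) →ₗ[ℝ] V 4 [⋀^Fin 3]→ₗ[ℝ] ℝ :=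
  Matrix.detRowAlternating.curryLeft ∘ₗ (dotProductEquiv ℝ (Fin 4)).symm.toLinearMap

lemma hodgeStar_apply (ν : Dual ℝ (V 4)) (X Y Z : V 4) :
    hodgeStar ν ![X, Y, Z] = vol4 (sharp ν) X Y Z := by
  rw [hodgeStar, LinearMap.comp_apply, AlternatingMap.curryLeft_apply_apply]
  rfl

lemma hodgeStar_stdB (ν : Dual ℝ (V 4)) {i j k l : Fin 4} (h : DirectOrdering i j k l) :
    hodgeStar ν ![stdB j, stdB k, stdB l] = ν (stdB i) := by
  obtain ⟨σ, hσ, rfl, rfl, rfl, rfl⟩ := h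
  let M : Matrix (Fin 4) (Fin 4) ℝ := .of ![sharp ν, stdB (σ 1), stdB (σ 2), stdB (σ 3)]
  have hM : (M.submatrix id σ).BlockTriangular id := by
    intro a b hab
    fin_cases a <;> fin_cases b <;> simp_all [M, stdB]
  have hdet : (M.submatrix id σ).det = ν (stdB (σ 0)) := by
    rw [Matrix.det_of_isUpperTriangular hM]
    simp [M, Fin.prod_univ_four, stdB, sharp]
  rw [Matrix.det_permute', hσ, Units.val_one, Int.cast_one, one_mul] at hdet
  rw [hodgeStar_apply, vol4, hdet]

lemma DirectOrdering.rotate {i j k l : Fin 4} (h : DirectOrdering i j k l) :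
    DirectOrdering i k l j := by
  obtain ⟨σ, hσ, rfl, rfl, rfl, rfl⟩ := h
  exact ⟨σ * (Equiv.swap 1 2 * Equiv.swap 2 3), by rw [map_mul, hσ]; decide,
    congrArg σ (by decide), congrArg σ (by decide), congrArg σ (by decide), congrArg σ (by decide)⟩

lemma exists_directOrdering (i : Fin 4) : ∃ j k l, DirectOrdering i j k l := by
  revert i
  decide +kernel

lemma exists_directOrdering_or_swap {j k l : Fin 4} (hjk : j ≠ k) (hkl : k ≠ l) (hjl : j ≠ l) :
    ∃ i, DirectOrdering i j k l ∨ DirectOrdering i k j l := by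
  revert j k l
  decide +kernel

lemma filter_directOrdering {i j k l : Fin 4} (h : DirectOrdering i j k l) :
    ({p | DirectOrdering i p.1 p.2.1 p.2.2} : Finset (Fin 4 × Fin 4 × Fin 4)) =
      {(j, k, l), (k, l, j), (l, j, k)} := by
  ext ⟨j', k', l'⟩
  simp only [Finset.mem_filter_univ, Finset.mem_insert, Finset.mem_singleton, Prod.mk.injEq]
  constructor
  · have even_fixing_zero : ∀ ρ : Equiv.Perm (Fin 4), Equiv.Perm.sign ρ = 1 → ρ 0 = 0 →
        ρ 1 = 1 ∧ ρ 2 = 2 ∧ ρ 3 = 3 ∨ ρ 1 = 2 ∧ ρ 2 = 3 ∧ ρ 3 = 1 ∨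
          ρ 1 = 3 ∧ ρ 2 = 1 ∧ ρ 3 = 2 := by
      decide
    obtain ⟨σ, hσ, rfl, rfl, rfl, rfl⟩ := h
    rintro ⟨τ, hτ, h₀, rfl, rfl, rfl⟩
    simpa [Equiv.symm_apply_eq, h₀, hσ, hτ] using even_fixing_zero (σ⁻¹ * τ)
  · rintro (⟨rfl, rfl, rfl⟩ | ⟨rfl, rfl, rfl⟩ | ⟨rfl, rfl, rfl⟩)
    exacts [h, h.rotate, h.rotate.rotate]

lemma ext_of_directOrdering {ω η : V 4 [⋀^Fin 3]→ₗ[ℝ] ℝ}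
    (h : ∀ i j k l, DirectOrdering i j k l →
      ω ![stdB j, stdB k, stdB l] = η ![stdB j, stdB k, stdB l]) : ω = η := by
  refine Basis.ext_alternating (Pi.basisFun ℝ (Fin 4)) fun v hv => ?_
  have hb : (fun a => Pi.basisFun ℝ (Fin 4) (v a)) = ![stdB (v 0), stdB (v 1), stdB (v 2)] := by
    ext a : 1
    fin_cases a <;> simp [stdB]
  rw [hb]
  obtain ⟨i, hi | hi⟩ := exists_directOrdering_or_swap (hv.ne (by decide : (0 : Fin 3) ≠ 1))
    (hv.ne (by decide : (1 : Fin 3) ≠ 2)) (hv.ne (by decide : (0 : Fin 3) ≠ 2))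
  · exact h i _ _ _ hi
  · rw [alternating_swap_left ω, alternating_swap_left η, h i _ _ _ hi]

lemma traceForm_stdB {T : Tri 4} (hT : T ∈ Torsion 4) {i j k l : Fin 4}
    (h : DirectOrdering i j k l) :
    traceForm T (stdB i) = T (stdB i) (stdB j) (stdB j) + T (stdB i) (stdB k) (stdB k) +
      T (stdB i) (stdB l) (stdB l) := by
  obtain ⟨σ, -, rfl, rfl, rfl, rfl⟩ := h
  rw [traceForm_apply, ← Equiv.sum_comp σ, Fin.sum_univ_four, self_eq_neg.1 (hT _ _ _), zero_add]

lemma Wc_eq_sum_rotations (T : Tri 4) {i j k l : Fin 4} (h : DirectOrdering i j k l) :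
    Wc T i = Zc T i j k l + Zc T i k l j + Zc T i l j k := by
  have hprod : Wc T i = ∑ p : Fin 4 × Fin 4 × Fin 4,
      if DirectOrdering i p.1 p.2.1 p.2.2 then Zc T i p.1 p.2.1 p.2.2 else 0 := by
    simp only [Wc, Fintype.sum_prod_type]
  rw [hprod, ← Finset.sum_filter, filter_directOrdering h]
  obtain ⟨σ, -, rfl, rfl, rfl, rfl⟩ := h
  simp [add_assoc]

lemma Wc_eq_two_mul_traceForm_add_bianchiForm {T : Tri 4} (hT : T ∈ Torsion 4)
    {i j k l : Fin 4} (h : DirectOrdering i j k l) :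
    Wc T i = 2 * traceForm T (stdB i) + bianchiForm T ![stdB j, stdB k, stdB l] := by
  rw [Wc_eq_sum_rotations T h, traceForm_stdB hT h, bianchiForm_apply hT]
  simp only [Zc, Matrix.cons_val]
  ring

lemma mem_wZero_iff {T : Tri 4} :
    T ∈ WZero ↔ T ∈ Torsion 4 ∧ bianchiForm T = (-2 : ℝ) • hodgeStar (traceForm T) := by
  refine and_congr_right fun hT => ⟨fun hW => ?_, fun hB i => ?_⟩
  · refine ext_of_directOrdering fun i j k l h => ?_
    rw [AlternatingMap.smul_apply, hodgeStar_stdB _ h, smul_eq_mul]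
    linarith [Wc_eq_two_mul_traceForm_add_bianchiForm hT h, hW i]
  · obtain ⟨j, k, l, h⟩ : ∃ j k l, DirectOrdering i j k l := exists_directOrdering i
    rw [Wc_eq_two_mul_traceForm_add_bianchiForm hT h, hB, AlternatingMap.smul_apply,
      hodgeStar_stdB _ h, smul_eq_mul]
    ring

lemma cartanA_eq_wZero_inf_kerTrace : CartanA 4 = WZero ⊓ kerTrace 4 := by
  ext T
  refine and_congr_left fun hc => ?_
  rw [kerTrace_eq_ker_traceForm, SetLike.mem_coe, LinearMap.mem_ker] at hc
  rw [SetLike.mem_coe, SetLike.mem_coe, mem_wZero_iff, hc, map_zero, smul_zero]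
  exact and_congr_right mem_kerBianchi_iff

/-- The element of `C₋` attached to a functional `ν`. -/
def cminusTensor : Dual ℝ (V 4) →ₗ[ℝ] Tri 4 :=
  vectorialTorsion - (2 : ℝ) • skewTorsion ∘ₗ hodgeStar

lemma cminusTensor_apply (ν : Dual ℝ (V 4)) (X Y Z : V 4) :
    cminusTensor ν X Y Z = ν X * inn Y Z - ν Y * inn X Z - 2 * vol4 (sharp ν) X Y Z := by
  simp [cminusTensor, vectorialTorsion_apply, skewTorsion_apply, hodgeStar_apply]

lemma cminus_eq_range : Cminus = LinearMap.range cminusTensor := by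
  ext T
  refine exists_congr fun ν => ?_
  simp only [LinearMap.ext_iff, cminusTensor_apply, eq_comm]

lemma traceForm_cminusTensor (ν : Dual ℝ (V 4)) : traceForm (cminusTensor ν) = (3 : ℝ) • ν := by
  simp only [cminusTensor, LinearMap.sub_apply, LinearMap.smul_apply, LinearMap.comp_apply,
    map_sub, map_smul, traceForm_vectorialTorsion, traceForm_skewTorsion, smul_zero, sub_zero]
  norm_num

lemma bianchiForm_cminusTensor (ν : Dual ℝ (V 4)) :
    bianchiForm (cminusTensor ν) = (-6 : ℝ) • hodgeStar ν := by
  simp only [cminusTensor, LinearMap.sub_apply, LinearMap.smul_apply, LinearMap.comp_apply,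
    map_sub, map_smul, bianchiForm_vectorialTorsion, bianchiForm_skewTorsion, smul_smul, zero_sub,
    ← neg_smul]
  norm_num

lemma cminus_le_wZero : Cminus ≤ WZero := by
  rw [cminus_eq_range]
  rintro _ ⟨ν, rfl⟩
  refine mem_wZero_iff.2 ⟨?_, ?_⟩
  · exact sub_mem (vectorialTorsion_mem_torsion ν)
      (Submodule.smul_mem _ _ (skewTorsion_mem_torsion _))
  · rw [bianchiForm_cminusTensor, traceForm_cminusTensor, map_smul, smul_smul]
    norm_num

lemma isCompl_kerTrace_cminus : IsCompl (kerTrace 4) Cminus := by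
  rw [kerTrace_eq_ker_traceForm, cminus_eq_range]
  exact isCompl_ker_range_of_forall_apply_eq_smul three_ne_zero traceForm_cminusTensor

/-- the space of torsion tensors on `ℝ⁴` satisfying `W_i = 0` for all
`i` equals the internal direct sum `𝒜 ⊕ C₋`. -/
theorem wzero_eq_cartanA_sup_cminus :
    WZero = CartanA 4 ⊔ Cminus ∧ CartanA 4 ⊓ Cminus = ⊥ := by
  rw [cartanA_eq_wZero_inf_kerTrace]
  constructor
  · calc WZero = (Cminus ⊔ kerTrace 4) ⊓ WZero := by
          rw [isCompl_kerTrace_cminus.symm.sup_eq_top, top_inf_eq]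
      _ = Cminus ⊔ kerTrace 4 ⊓ WZero := sup_inf_assoc_of_le _ cminus_le_wZero
      _ = WZero ⊓ kerTrace 4 ⊔ Cminus := by rw [sup_comm, inf_comm]
  · rw [inf_assoc, isCompl_kerTrace_cminus.inf_eq_bot, inf_bot_eq]
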